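/- The only integer solutions to y^2 + 1 = 2·z^k with k > 2, y ≥ 1, z ≥ 1 are (y, z) = (239, 13) with k = 4, and (y, z) = (1, 1) with any k > 2. -/

import Mathlib

/-!
If `k` has an odd prime factor, the equation becomes `y² + 1 = 2wⁿ` with `n ≥ 3` odd, and this is
Størmer's theorem: factoring in the Gaussian integers, `y + i` is `1 + i` times a unit times an
`n`-th power `ζⁿ`, which puts `ζⁿ` on one of the lines `re ± im = 1`; a divisibility property of
`re ± im` puts `ζ` itself on such a line, and a 2-adic expansion leaves only `ζ = 1` (`stormer`).

Otherwise `4 ∣ k` and the equation is Ljunggren's `X² + 1 = 2Y⁴`. The known solution `X = 239`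
is used as the anchor of a Thue-Siegel argument. For any other solution, `(X ± i)(239 + i)` is, up to
a factor `2` or `1/2`, the fourth power of a Gaussian integer `γ` (`ljunggren_fourth_power`), so the
argument of a suitable associate of `γ` differs from a quarter of the argument `ψ` of `239 + i` by
only about `1 / (4X)`, where `X` has the size of `|γ|⁴`.
The Padé approximants to the fourth root, evaluated on the unit circle, become the trigonometric sums
`padeSin r`. These satisfy `padeSin (r + 1)' = -c sin · padeSin r`, whence their absolute
value is between `0.24 · 0.6 ^ r` and `1/4` times `x ^ (2r + 1)` for small `x ≥ 0`
(`padeSin_bounds`); their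
coefficients have denominator dividing `8 ^ r` and sum at most `4 ^ r`. Multiplying the approximant
of order `r` at `ψ` by `γ` gives a Gaussian integer whose imaginary part, for the right `r`, is
nonzero but less than 1 in absolute value once `X ≥ 5 ^ 13` (`ljunggren_large`). Below that bound
the solutions of the Pell equation `X² + 1 = 2Z²` are among the first thirteen, where only `Z = 1` and
`Z = 169` are squares (`ljunggren_small`).
-/

/-! ### Factorization in the Gaussian integers -/

theorem gaussian_unit_cases {u : GaussianInt} (hu : IsUnit u) :
    u = 1 ∨ u = -1 ∨ u = ⟨0, 1⟩ ∨ u = ⟨0, -1⟩ := by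
  have h := Zsqrtd.norm_eq_one_iff.mpr hu
  have h2 : u.re * u.re + u.im * u.im = 1 := by
    have h3 : u.norm = 1 := by
      have := GaussianInt.norm_nonneg u
      omega
    rw [Zsqrtd.norm_def] at h3
    linarith
  have h1 : u.re ≤ 1 := by nlinarith [sq_nonneg u.im]
  have h1' : -1 ≤ u.re := by nlinarith [sq_nonneg u.im]
  have h4 : u.im ≤ 1 := by nlinarith [sq_nonneg u.re]
  have h4' : -1 ≤ u.im := by nlinarith [sq_nonneg u.re]
  obtain ⟨a, b⟩ := u
  simp only at *
  interval_cases a <;> interval_cases b <;> simp_all [Zsqrtd.ext_iff]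

/-- With `y = 2c + 1`, the power `w ^ n = 2c² + 2c + 1` is the product of the coprime conjugate
Gaussian integers `(c + 1) ± c i`, so each of these is a unit times an `n`-th power. -/
theorem gaussian_factor {y w : ℤ} {n : ℕ} (h : y ^ 2 + 1 = 2 * w ^ n) :
    ∃ η u : GaussianInt, IsUnit u ∧ (⟨y, 1⟩ : GaussianInt) = ⟨1, 1⟩ * (u * η ^ n) ∧
      η.norm ^ n = w ^ n := by
  have hy : Odd y := by
    by_contra hy
    rw [Int.not_odd_iff_even] at hy
    obtain ⟨c, rfl⟩ := hy
    have h2 : 2 * (2 * c ^ 2 - w ^ n) = -1 := by linarith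
    omega
  obtain ⟨c, rfl⟩ := hy
  have hw : w ^ n = 2 * c ^ 2 + 2 * c + 1 := by linarith
  have hcop : IsCoprime (⟨c + 1, -c⟩ : GaussianInt) ⟨c + 1, c⟩ := by
    refine ⟨⟨-(c ^ 2 + c), c ^ 2 + c⟩, ⟨c + 1 - (c ^ 2 + c), -c - (c ^ 2 + c)⟩, ?_⟩
    ext <;> simp <;> ring
  have hmul : (⟨c + 1, -c⟩ : GaussianInt) * ⟨c + 1, c⟩ = (w : GaussianInt) ^ n := by
    rw [← Int.cast_pow, hw]
    ext <;> simp [pow_two] <;> ring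
  obtain ⟨η, u, hu⟩ := exists_associated_pow_of_mul_eq_pow' hcop hmul
  refine ⟨η, u, u.isUnit, ?_, ?_⟩
  · rw [mul_comm (u : GaussianInt), hu]
    ext <;> simp
    ring
  · have h1 := congrArg Zsqrtd.norm hu
    have h2 : (u : GaussianInt).norm = 1 := by
      have h3 := Zsqrtd.norm_eq_one_iff.mpr u.isUnit
      have := GaussianInt.norm_nonneg (u : GaussianInt)
      omega
    rw [Zsqrtd.norm_mul, h2, mul_one] at h1
    have h4 : (η ^ n).norm = η.norm ^ n := map_pow Zsqrtd.normMonoidHom η n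
    rw [h4] at h1
    rw [h1, hw, Zsqrtd.norm_def]
    ring

/-! ### Odd exponents: Størmer's theorem -/

/-- Coordinates of the condition `η ≡ 1 mod 2 + 2i`, that is, of `η` being primary. -/
theorem primary_iff (η : GaussianInt) :
    (⟨2, 2⟩ : GaussianInt) ∣ η - 1 ↔ (2 ∣ η.im ∧ 4 ∣ η.re + η.im - 1) := by
  constructor
  · rintro ⟨x, hx⟩
    have h1 := congrArg Zsqrtd.re hx
    have h2 := congrArg Zsqrtd.im hx
    simp at h1 h2
    constructor <;> omega
  · rintro ⟨⟨s, hs⟩, ⟨t, ht⟩⟩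
    refine ⟨⟨t, s - t⟩, ?_⟩
    ext <;> simp <;> omega

theorem exists_primary {η : GaussianInt} (h : Odd η.norm) :
    ∃ v : GaussianInt, IsUnit v ∧ (⟨2, 2⟩ : GaussianInt) ∣ v * η - 1 := by
  have hi : IsUnit (⟨0, 1⟩ : GaussianInt) := by
    rw [← Zsqrtd.norm_eq_one_iff]; rfl
  have hi' : IsUnit (⟨0, -1⟩ : GaussianInt) := by
    rw [← Zsqrtd.norm_eq_one_iff]; rfl
  have h1 : Odd (η.re + η.im) := by
    rw [Zsqrtd.norm_def] at h
    have h2 : η.re + η.im =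
      (η.re * η.re - -1 * η.im * η.im) - (η.re * (η.re - 1)) - (η.im * (η.im - 1)) := by ring
    rw [h2]
    exact (h.sub_even (Int.even_mul_pred_self _)).sub_even (Int.even_mul_pred_self _)
  have h3 : η.im % 2 = 0 ∨ η.im % 2 = 1 := by omega
  have h4 : (η.re + η.im) % 4 = 1 ∨ (η.re + η.im) % 4 = 3 := by
    obtain ⟨t, ht⟩ := h1; omega
  have h5 : (η.re - η.im) % 4 = 1 ∨ (η.re - η.im) % 4 = 3 := by
    obtain ⟨t, ht⟩ := h1; omega
  obtain ⟨t, ht⟩ := h1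
  rcases h3 with h3 | h3
  · rcases h4 with h4 | h4
    · exact ⟨1, isUnit_one, (primary_iff _).mpr (by simp; omega)⟩
    · exact ⟨-1, isUnit_one.neg, (primary_iff _).mpr (by simp; omega)⟩
  · rcases h5 with h5 | h5
    · exact ⟨_, hi, (primary_iff _).mpr (by simp; omega)⟩
    · exact ⟨_, hi', (primary_iff _).mpr (by simp; omega)⟩

/-- For odd `n` the sum of the real and imaginary parts of `(a + b i) ^ n` is divisible by
`a + b` when `n ≡ 1 mod 4` and by `a - b` when `n ≡ 3 mod 4`. Indeed `(a + b i) ^ 4` has imaginary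
part `4ab(a - b)(a + b)`, hence is an integer modulo either factor. -/
theorem re_add_im_dvd (a b : ℤ) (s : ℕ) :
    (a + b) ∣
      (((⟨a, b⟩ : GaussianInt) ^ (4 * s + 1)).re + ((⟨a, b⟩ : GaussianInt) ^ (4 * s + 1)).im) ∧
    (a - b) ∣
      (((⟨a, b⟩ : GaussianInt) ^ (4 * s + 3)).re + ((⟨a, b⟩ : GaussianInt) ^ (4 * s + 3)).im) := by
  have h4 : (⟨a, b⟩ : GaussianInt) ^ 4 =
      ⟨a ^ 4 - 6 * a ^ 2 * b ^ 2 + b ^ 4, 4 * a * b * (a - b) * (a + b)⟩ := by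
    simp only [pow_succ, pow_zero, one_mul]
    ext <;> simp <;> ring
  have key : ∀ d : ℤ, d ∣ 4 * a * b * (a - b) * (a + b) → ∀ z : GaussianInt, d ∣ z.re + z.im →
      d ∣ ((⟨a, b⟩ : GaussianInt) ^ 4 * z).re + ((⟨a, b⟩ : GaussianInt) ^ 4 * z).im := by
    rintro d ⟨e, he⟩ z ⟨f, hf⟩
    rw [h4]
    refine ⟨(a ^ 4 - 6 * a ^ 2 * b ^ 2 + b ^ 4) * f + e * (z.re - z.im), ?_⟩
    simp only [Zsqrtd.re_mul, Zsqrtd.im_mul, he]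
    linear_combination (a ^ 4 - 6 * a ^ 2 * b ^ 2 + b ^ 4) * hf
  induction s with
  | zero =>
    refine ⟨by simp, ⟨a ^ 2 + 4 * a * b + b ^ 2, ?_⟩⟩
    simp [pow_succ]
    ring
  | succ s ih =>
    rw [show 4 * (s + 1) + 1 = 4 + (4 * s + 1) by ring,
      show 4 * (s + 1) + 3 = 4 + (4 * s + 3) by ring, pow_add _ 4, pow_add _ 4]
    exact ⟨key _ (Dvd.intro_left _ rfl) _ ih.1,
      key _ ⟨4 * a * b * (a + b), by ring⟩ _ ih.2⟩

theorem pow_one_add (μ : GaussianInt) (n : ℕ) : ∃ y, (1 + μ) ^ n = 1 + n * μ + μ ^ 2 * y := by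
  induction n with
  | zero => exact ⟨0, by simp⟩
  | succ n ih =>
    obtain ⟨y, hy⟩ := ih
    refine ⟨n + y + μ * y, ?_⟩
    rw [pow_succ, hy]
    push_cast
    ring

theorem pow_two_pow_one_add (b : ℤ) (x : GaussianInt) (e : ℕ) :
    ∃ y : GaussianInt, (1 + 4 * b * x) ^ (2 ^ e) = 1 + 2 ^ e * (4 * b * (x + 2 * b * y)) := by
  induction e with
  | zero => exact ⟨0, by simp⟩
  | succ e ih =>
    obtain ⟨y, hy⟩ := ih
    refine ⟨y + 2 ^ e * (x + 2 * b * y) ^ 2, ?_⟩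
    rw [pow_succ, pow_mul, hy]
    ring

/-- If `η` is primary and `η ^ n` lies on the line `re + im = 1` for an odd `n ≥ 3`, then `η = 1`.
By `re_add_im_dvd` the point `η = a + b i` lies on `a + b = 1` or on `a - b = 1`. If `b ≠ 0`,
expanding `η ^ n` 2-adically to first order gives `re + im = 1 + c t` with `c ≠ 0` and `t` odd,
which is impossible. -/
theorem stormer_core {η : GaussianInt} {n : ℕ} (hη : (⟨2, 2⟩ : GaussianInt) ∣ η - 1) (hn : Odd n)
    (hn3 : 3 ≤ n) (h : (η ^ n).re + (η ^ n).im = 1) : η = 1 := by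
  obtain ⟨⟨c, hc⟩, hab⟩ := (primary_iff η).mp hη
  obtain ⟨a, b⟩ := η
  simp only at hc hab
  have h4 : n % 4 = 1 ∨ n % 4 = 3 := by
    obtain ⟨t, ht⟩ := hn; omega
  suffices hb : b = 0 ∧ a = 1 by
    rw [hb.1, hb.2]; rfl
  rcases h4 with h4 | h4
  · obtain ⟨s, rfl⟩ : ∃ s, n = 4 * s + 1 := ⟨n / 4, by omega⟩
    have hd := (re_add_im_dvd a b s).1
    rw [h] at hd
    have hab1 : a = 1 - b := by
      rcases Int.isUnit_iff.mp (isUnit_of_dvd_one hd) with h1 | h1 <;> omega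
    by_cases hb : b = 0
    · exact ⟨hb, by omega⟩
    exfalso
    obtain ⟨e, m, hm, rfl⟩ := Nat.exists_eq_two_pow_mul_odd (n := s) (by omega)
    -- `θ` is the first-order part of `η ^ 2 = 1 + 2 b θ`
    set θ : GaussianInt := ⟨-1, 1 - b⟩ with hθ
    set x : GaussianInt := θ + b * θ ^ 2 with hx
    have hη4 : (⟨a, b⟩ : GaussianInt) ^ 4 = 1 + 4 * b * x := by
      have h2 : (⟨a, b⟩ : GaussianInt) ^ 2 = 1 + 2 * b * θ := by
        rw [hθ, hab1]
        ext <;> simp [pow_succ] <;> ring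
      rw [show 4 = 2 * 2 by rfl, pow_mul, h2, hx]
      ring
    obtain ⟨y, hy⟩ := pow_two_pow_one_add b x e
    obtain ⟨z, hz⟩ := pow_one_add (2 ^ e * (4 * b * (x + 2 * b * y))) m
    have hpow : (⟨a, b⟩ : GaussianInt) ^ (4 * (2 ^ e * m) + 1) =
        ⟨a, b⟩ + ((2 ^ e * 4 * b : ℤ) : GaussianInt) * (⟨a, b⟩ * (m * x +
          2 * b * (m * y + 2 ^ e * 2 * (x + 2 * b * y) ^ 2 * z))) := by
      rw [pow_succ, pow_mul, pow_mul, hη4, hy, hz]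
      push_cast
      ring
    set r := (m * y + 2 ^ e * 2 * (x + 2 * b * y) ^ 2 * z : GaussianInt) with hr
    rw [hpow] at h
    have hN : (2 ^ e * 4 * b : ℤ) ≠ 0 := by positivity
    set N := (2 ^ e * 4 * b : ℤ)
    have hx' : x = ⟨-1 + b * (2 * b - b ^ 2), 1 - b - b * 2 * (1 - b)⟩ := by
      rw [hx, hθ]
      ext <;> simp [pow_succ, -mul_eq_mul_left_iff] <;> ring
    have h5 : N * ((m : ℤ) * (-5 * b * (1 - b) ^ 2) +
        2 * b * ((a + b) * r.re + (a - b) * r.im)) = 0 := by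
      rw [hx'] at h
      simp only [Zsqrtd.re_add, Zsqrtd.im_add, Zsqrtd.re_mul, Zsqrtd.im_mul, Zsqrtd.re_intCast,
        Zsqrtd.im_intCast, Zsqrtd.re_natCast, Zsqrtd.im_natCast, Zsqrtd.re_ofNat,
        Zsqrtd.im_ofNat] at h
      rw [hab1] at h ⊢
      linear_combination h
    have h6 : b * ((m : ℤ) * (-5 * (1 - b) ^ 2) + 2 * ((a + b) * r.re + (a - b) * r.im)) = 0 := by
      linear_combination (mul_eq_zero.mp h5).resolve_left hN
    have h7 := (mul_eq_zero.mp h6).resolve_left hb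
    have h8 : Odd ((m : ℤ) * (-5 * (1 - b) ^ 2) + 2 * ((a + b) * r.re + (a - b) * r.im)) := by
      refine Odd.add_even (Odd.mul (by exact_mod_cast hm) (Odd.mul (by decide) (Odd.pow ?_)))
        (even_two_mul _)
      exact ⟨-c, by omega⟩
    rw [h7] at h8
    exact absurd h8 (by decide)
  · obtain ⟨s, rfl⟩ : ∃ s, n = 4 * s + 3 := ⟨n / 4, by omega⟩
    have hd := (re_add_im_dvd a b s).2
    rw [h] at hd
    have hab1 : a = 1 + b := by
      rcases Int.isUnit_iff.mp (isUnit_of_dvd_one hd) with h1 | h1 <;> omega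
    by_cases hb : b = 0
    · exact ⟨hb, by omega⟩
    exfalso
    obtain ⟨y, hy⟩ := pow_one_add ((b : GaussianInt) * ⟨1, 1⟩) (4 * s + 3)
    have h1 : (1 + (b : GaussianInt) * ⟨1, 1⟩) = ⟨a, b⟩ := by
      rw [hab1]; ext <;> simp
    rw [h1] at hy
    rw [hy] at h
    have h5 : 2 * b * ((4 * s + 3 : ℤ) + b * (y.re - y.im)) = 0 := by
      simp [pow_succ] at h
      linear_combination h
    have h6 := (mul_eq_zero.mp h5).resolve_left (by omega)
    rw [hc] at h6
    have h7 : 2 * (2 * (s : ℤ) + c * (y.re - y.im)) = -3 := by linear_combination h6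
    omega

/-- Størmer: `y ^ 2 + 1 = 2 w ^ n` has only the trivial solution `y = 1` for odd `n ≥ 3`. After
normalizing the base to be primary, `y + i` being `(1 + i)` times a unit times `ζ ^ n` places `ζ ^ n`
on one of the lines `re ± im = 1`. -/
theorem stormer {y w : ℤ} {n : ℕ} (hn : Odd n) (hn3 : 3 ≤ n) (hy : 1 ≤ y)
    (h : y ^ 2 + 1 = 2 * w ^ n) : y = 1 := by
  obtain ⟨η, u, hu, hf, hnorm⟩ := gaussian_factor h
  have hodd : Odd η.norm := by
    have h1 : Odd (w ^ n) := by
      have hy : Odd y := by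
        have : Odd (y ^ 2) := ⟨w ^ n - 1, by linarith⟩
        exact Int.odd_pow' (by norm_num) |>.mp this
      obtain ⟨c, rfl⟩ := hy
      exact ⟨c ^ 2 + c, by linarith⟩
    rw [← hnorm] at h1
    exact (Int.odd_pow' (by omega)).mp h1
  obtain ⟨v, hv, hprim⟩ := exists_primary hodd
  obtain ⟨v', hvv⟩ := hv.exists_left_inv
  have hη : η = v' * (v * η) := by rw [← mul_assoc, hvv, one_mul]
  have hv' : IsUnit v' := IsUnit.of_mul_eq_one v hvv
  set ζ := v * η with hζ
  rw [hη, mul_pow, ← mul_assoc u] at hf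
  have hu' : IsUnit (u * v' ^ n) := hu.mul (hv'.pow n)
  set u' := u * v' ^ n
  have hprimn : (⟨2, 2⟩ : GaussianInt) ∣ ζ ^ n - 1 := by
    refine hprim.trans ?_
    simpa using sub_dvd_pow_sub_pow ζ 1 n
  obtain ⟨he, hf4⟩ := (primary_iff _).mp hprimn
  have hcase : (ζ ^ n).re + (ζ ^ n).im = 1 ∨ (ζ ^ n).re - (ζ ^ n).im = 1 := by
    have him := congrArg Zsqrtd.im hf
    rcases gaussian_unit_cases hu' with h1 | h1 | h1 | h1 <;> rw [h1] at him <;> simp at him <;>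
      omega
  have hζ1 : ζ = 1 := by
    rcases hcase with h1 | h1
    · exact stormer_core hprim hn hn3 h1
    · have hs : (star ζ) = 1 := by
        refine stormer_core ?_ hn hn3 (n := n) ?_
        · obtain ⟨h2, h3⟩ := (primary_iff _).mp hprim
          refine (primary_iff _).mpr ?_
          simp only [Zsqrtd.im_star, Zsqrtd.re_star]
          omega
        · rw [(star_pow ζ n).symm, Zsqrtd.re_star, Zsqrtd.im_star]
          linarith
      simpa using congrArg star hs
  rw [hζ1, one_pow, mul_one] at hf
  have hre := congrArg Zsqrtd.re hf
  have him := congrArg Zsqrtd.im hf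
  rcases gaussian_unit_cases hu' with h1 | h1 | h1 | h1 <;> rw [h1] at hre him <;>
    simp at hre him <;> omega


/-! ### Padé approximation of the fourth root on the unit circle -/

/-- The product of generalized binomial coefficients `C(r + 1/4, j) C(r - 1/4, m)` with `r = j + m`,
written with rising products. Up to sign these are the coefficients of the numerator and denominator
of the diagonal Padé approximant of order `r` to `(1 - z) ^ (1/4)`. -/
noncomputable def padeCoeff (j m : ℕ) : ℝ :=
  (∏ i ∈ Finset.range j, ((m : ℝ) + 5 / 4 + i)) / j.factorial *
    ((∏ i ∈ Finset.range m, ((j : ℝ) + 3 / 4 + i)) / m.factorial)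

theorem padeCoeff_pos (j m : ℕ) : 0 < padeCoeff j m := by
  unfold padeCoeff
  have h1 : ∀ i ∈ Finset.range j, (0 : ℝ) < (m : ℝ) + 5 / 4 + i := fun i _ => by positivity
  have h2 : ∀ i ∈ Finset.range m, (0 : ℝ) < (j : ℝ) + 3 / 4 + i := fun i _ => by positivity
  have := Finset.prod_pos h1
  have := Finset.prod_pos h2
  positivity

theorem prod_range_shift (q : ℝ) (n : ℕ) :
    (∏ i ∈ Finset.range n, (q + 1 + i)) * q = (∏ i ∈ Finset.range n, (q + i)) * (q + n) := by
  have h1 := Finset.prod_range_succ (fun i : ℕ => q + (i : ℝ)) n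
  have h2 := Finset.prod_range_succ' (fun i : ℕ => q + (i : ℝ)) n
  rw [← h1, h2]
  simp only [Nat.cast_add, Nat.cast_one, Nat.cast_zero, add_zero]
  congr 1
  exact Finset.prod_congr rfl fun i _ => by ring

theorem padeCoeff_succ_right (j m : ℕ) :
    padeCoeff j (m + 1) * ((m + 1) * (m + 1 + 1 / 4)) =
      (((j + m : ℕ) + 1 : ℝ) ^ 2 - 1 / 16) * padeCoeff j m := by
  have h := prod_range_shift ((m : ℝ) + 5 / 4) j
  unfold padeCoeff
  rw [Finset.prod_range_succ, Nat.factorial_succ]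
  have e : ∀ i : ℕ, (((m + 1 : ℕ) : ℝ) + 5 / 4 + i) = (m : ℝ) + 5 / 4 + 1 + i := fun i => by
    push_cast; ring
  simp only [e]
  have hj := Nat.cast_ne_zero (R := ℝ).mpr j.factorial_ne_zero
  have hm := Nat.cast_ne_zero (R := ℝ).mpr m.factorial_ne_zero
  generalize ∏ i ∈ Finset.range j, ((m : ℝ) + 5 / 4 + 1 + i) = P at h ⊢
  generalize ∏ i ∈ Finset.range j, ((m : ℝ) + 5 / 4 + i) = P₀ at h ⊢
  generalize ∏ i ∈ Finset.range m, ((j : ℝ) + 3 / 4 + i) = Q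
  push_cast
  trans P * (m + 5 / 4) * (j + 3 / 4 + m) * Q / (j.factorial * m.factorial)
  · field_simp
    ring
  · rw [h]
    field_simp
    ring

theorem padeCoeff_succ_left (j m : ℕ) :
    padeCoeff (j + 1) m * ((j + 1) * (j + 1 - 1 / 4)) =
      (((j + m : ℕ) + 1 : ℝ) ^ 2 - 1 / 16) * padeCoeff j m := by
  have h := prod_range_shift ((j : ℝ) + 3 / 4) m
  unfold padeCoeff
  rw [Finset.prod_range_succ, Nat.factorial_succ]
  have e : ∀ i : ℕ, (((j + 1 : ℕ) : ℝ) + 3 / 4 + i) = (j : ℝ) + 3 / 4 + 1 + i := fun i => by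
    push_cast; ring
  simp only [e]
  have hj := Nat.cast_ne_zero (R := ℝ).mpr j.factorial_ne_zero
  have hm := Nat.cast_ne_zero (R := ℝ).mpr m.factorial_ne_zero
  generalize ∏ i ∈ Finset.range m, ((j : ℝ) + 3 / 4 + 1 + i) = P at h ⊢
  generalize ∏ i ∈ Finset.range m, ((j : ℝ) + 3 / 4 + i) = P₀ at h ⊢
  generalize ∏ i ∈ Finset.range j, ((m : ℝ) + 5 / 4 + i) = Q
  push_cast
  trans P * (j + 3 / 4) * (m + 5 / 4 + j) * Q / (j.factorial * m.factorial)
  · field_simp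
    ring
  · rw [h]
    field_simp
    ring

open Finset in
/-- The Padé remainder for the fourth root on the unit circle: the imaginary part of
`exp(i x / 4) ∑ padeCoeff j m exp(i (m - j) x)`, summed over `j + m = r`. It vanishes to order
`2r + 1` at `x = 0`. -/
noncomputable def padeSin (r : ℕ) (x : ℝ) : ℝ :=
  ∑ p ∈ antidiagonal r, padeCoeff p.1 p.2 * Real.sin (((p.2 : ℝ) - p.1 + 1 / 4) * x)

open Finset in
/-- The real part of the same sum as in `padeSin`. -/
noncomputable def padeCos (r : ℕ) (x : ℝ) : ℝ :=
  ∑ p ∈ antidiagonal r, padeCoeff p.1 p.2 * Real.cos (((p.2 : ℝ) - p.1 + 1 / 4) * x)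

open Finset in
/-- The derivative of `padeSin (r + 1)` is a multiple of `sin x * padeSin r x`; this follows from the
two contiguity relations for `padeCoeff` and `cos (A + x) - cos (A - x) = -2 sin A sin x`. It is what
makes the order of vanishing visible without any hypergeometric identity. -/
theorem hasDerivAt_padeSin (r : ℕ) (x : ℝ) :
    HasDerivAt (padeSin (r + 1))
      (-(2 * ((((r : ℝ) + 1) ^ 2 - 1 / 16) / (r + 1)) * Real.sin x * padeSin r x)) x := by
  have h1 : HasDerivAt (padeSin (r + 1)) (∑ p ∈ antidiagonal (r + 1),
      padeCoeff p.1 p.2 * (Real.cos (((p.2 : ℝ) - p.1 + 1 / 4) * x) *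
        ((p.2 : ℝ) - p.1 + 1 / 4))) x := by
    unfold padeSin
    refine HasDerivAt.fun_sum fun p _ => ?_
    refine HasDerivAt.const_mul _ ?_
    refine HasDerivAt.sin ?_
    simpa using (hasDerivAt_id x).const_mul ((p.2 : ℝ) - p.1 + 1 / 4)
  convert h1 using 1
  have hr : (r : ℝ) + 1 ≠ 0 := by positivity
  have hsplit : ((r : ℝ) + 1) * ∑ p ∈ antidiagonal (r + 1),
      padeCoeff p.1 p.2 * (Real.cos (((p.2 : ℝ) - p.1 + 1 / 4) * x) * ((p.2 : ℝ) - p.1 + 1 / 4)) =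
      (∑ p ∈ antidiagonal (r + 1), padeCoeff p.1 p.2 * ((p.2 : ℝ) * (p.2 + 1 / 4)) *
        Real.cos (((p.2 : ℝ) - p.1 + 1 / 4) * x)) -
      ∑ p ∈ antidiagonal (r + 1), padeCoeff p.1 p.2 * ((p.1 : ℝ) * (p.1 - 1 / 4)) *
        Real.cos (((p.2 : ℝ) - p.1 + 1 / 4) * x) := by
    rw [mul_sum, ← sum_sub_distrib]
    refine sum_congr rfl fun p hp => ?_
    have : ((r : ℝ) + 1) = p.1 + p.2 := by
      rw [HasAntidiagonal.mem_antidiagonal] at hp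
      exact_mod_cast hp.symm
    rw [this]
    ring
  rw [Finset.Nat.sum_antidiagonal_succ' (n := r)
    (f := fun p => padeCoeff p.1 p.2 * ((p.2 : ℝ) * (p.2 + 1 / 4)) *
        Real.cos (((p.2 : ℝ) - p.1 + 1 / 4) * x)), Finset.Nat.sum_antidiagonal_succ (n := r)
    (f := fun p => padeCoeff p.1 p.2 * ((p.1 : ℝ) * (p.1 - 1 / 4)) *
        Real.cos (((p.2 : ℝ) - p.1 + 1 / 4) * x))] at hsplit
  simp only [Nat.cast_zero, zero_mul, mul_zero, zero_add, Nat.cast_add, Nat.cast_one,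
    padeCoeff_succ_left, padeCoeff_succ_right] at hsplit
  rw [← sum_sub_distrib] at hsplit
  have key : -(2 * (((r : ℝ) + 1) ^ 2 - 1 / 16) * Real.sin x * padeSin r x) =
      ∑ p ∈ antidiagonal r, ((((p.1 : ℝ) + p.2 + 1) ^ 2 - 1 / 16) * padeCoeff p.1 p.2 *
        Real.cos (((p.2 : ℝ) + 1 - p.1 + 1 / 4) * x) -
      (((p.1 : ℝ) + p.2 + 1) ^ 2 - 1 / 16) * padeCoeff p.1 p.2 *
        Real.cos (((p.2 : ℝ) - (p.1 + 1) + 1 / 4) * x)) := by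
    unfold padeSin
    rw [mul_sum, ← sum_neg_distrib]
    refine sum_congr rfl fun p hp => ?_
    have : (r : ℝ) = p.1 + p.2 := by
      rw [HasAntidiagonal.mem_antidiagonal] at hp
      exact_mod_cast hp.symm
    rw [this, show ((p.2 : ℝ) + 1 - p.1 + 1 / 4) * x = ((p.2 : ℝ) - p.1 + 1 / 4) * x + x by ring,
      show ((p.2 : ℝ) - (p.1 + 1) + 1 / 4) * x = ((p.2 : ℝ) - p.1 + 1 / 4) * x - x by ring,
      Real.cos_add, Real.cos_sub]
    ring
  rw [← key] at hsplit
  apply mul_left_cancel₀ hr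
  rw [hsplit]
  field_simp

theorem padeSin_zero_right (r : ℕ) : padeSin r 0 = 0 := by simp [padeSin]

theorem padeSin_zero_left (x : ℝ) : padeSin 0 x = Real.sin (1 / 4 * x) := by
  simp [padeSin, padeCoeff]

theorem le_of_deriv_le {f g f' g' : ℝ → ℝ} {c : ℝ} (h0 : f 0 ≤ g 0)
    (hf : ∀ x, HasDerivAt f (f' x) x) (hg : ∀ x, HasDerivAt g (g' x) x)
    (h : ∀ x, 0 ≤ x → x ≤ c → f' x ≤ g' x) {x : ℝ} (hx : 0 ≤ x) (hxc : x ≤ c) : f x ≤ g x :=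
  image_le_of_deriv_right_le_deriv_boundary (a := 0) (b := c)
    (fun y _ => (hf y).continuousAt.continuousWithinAt)
    (fun y _ => (hf y).hasDerivWithinAt) h0 (fun y _ => (hg y).continuousAt.continuousWithinAt)
    (fun y _ => (hg y).hasDerivWithinAt) (fun y hy => h y hy.1 hy.2.le) ⟨hx, hxc⟩

/-- Two-sided bounds of the exact order `x ^ (2r + 1)`, by induction on `r` from
`hasDerivAt_padeSin` and comparison of derivatives. The lower bound replaces the usual nonvanishing
argument for Padé approximants. -/
theorem padeSin_bounds (r : ℕ) : ∀ x : ℝ, 0 ≤ x → x ≤ 1 / 200 →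
    0.24 * 0.6 ^ r * x ^ (2 * r + 1) ≤ (-1) ^ r * padeSin r x ∧
      (-1) ^ r * padeSin r x ≤ x ^ (2 * r + 1) / 4 := by
  induction r with
  | zero =>
    intro x hx hx2
    rw [padeSin_zero_left]
    rcases hx.eq_or_lt with rfl | hx0
    · simp
    have h1 := Real.sin_gt_sub_cube (x := 1 / 4 * x) (by positivity)
    have h2 := Real.sin_le (x := 1 / 4 * x) (by positivity)
    simp only [pow_zero, mul_zero, zero_add, pow_one, one_mul]
    constructor
    · have : x ^ 3 ≤ x * (1 / 40000) := by
        have : x ^ 2 ≤ (1 / 200) ^ 2 := by gcongr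
        nlinarith
      nlinarith
    · linarith
  | succ r ih =>
    have hd : ∀ x, HasDerivAt (fun x => (-1) ^ (r + 1) * padeSin (r + 1) x)
        (2 * ((((r : ℝ) + 1) ^ 2 - 1 / 16) / (r + 1)) * Real.sin x * ((-1) ^ r * padeSin r x))
        x := fun x => by
      refine ((hasDerivAt_padeSin r x).const_mul ((-1) ^ (r + 1))).congr_deriv ?_
      ring
    have hp : ∀ K x : ℝ, HasDerivAt (fun x : ℝ => K * x ^ (2 * (r + 1) + 1))
        (K * ((2 * r + 3) * x ^ (2 * r + 2))) x := fun K x => by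
      refine ((hasDerivAt_pow (2 * (r + 1) + 1) x).const_mul K).congr_deriv ?_
      push_cast
      ring
    have hr : (0 : ℝ) ≤ r := Nat.cast_nonneg r
    have hκ : 15 / 16 * ((r : ℝ) + 1) ≤ (((r : ℝ) + 1) ^ 2 - 1 / 16) / (r + 1) := by
      rw [le_div_iff₀ (by positivity)]; nlinarith
    have hκ' : (((r : ℝ) + 1) ^ 2 - 1 / 16) / (r + 1) ≤ r + 1 := by
      rw [div_le_iff₀ (by positivity)]; nlinarith
    set κ := (((r : ℝ) + 1) ^ 2 - 1 / 16) / (r + 1)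
    intro x hx hx2
    constructor
    · refine le_of_deriv_le (c := 1 / 200) (by simp [padeSin_zero_right])
        (hp (0.24 * 0.6 ^ (r + 1))) hd ?_ hx hx2
      intro y hy hy2
      have hs : 0.99 * y ≤ Real.sin y := by
        rcases hy.eq_or_lt with rfl | hy0
        · simp
        have h1 := Real.sin_gt_sub_cube hy0
        have : y ^ 2 ≤ (1 / 200) ^ 2 := by gcongr
        nlinarith
      calc 0.24 * 0.6 ^ (r + 1) * ((2 * r + 3) * y ^ (2 * r + 2))
          = (0.6 * (2 * r + 3)) * (0.24 * 0.6 ^ r * y ^ (2 * r + 2)) := by ring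
        _ ≤ (2 * (15 / 16 * ((r : ℝ) + 1)) * 0.99) * (0.24 * 0.6 ^ r * y ^ (2 * r + 2)) := by
          refine mul_le_mul_of_nonneg_right ?_ (by positivity)
          linarith
        _ = 2 * (15 / 16 * ((r : ℝ) + 1)) * (0.99 * y) * (0.24 * 0.6 ^ r * y ^ (2 * r + 1)) := by
          ring
        _ ≤ 2 * κ * Real.sin y * ((-1) ^ r * padeSin r y) := by
          refine mul_le_mul ?_ (ih y hy hy2).1 (by positivity) ?_
          · exact mul_le_mul (by linarith) hs (by positivity) (by linarith)
          · exact mul_nonneg (by linarith) (hs.trans' (by positivity))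
    · rw [div_eq_inv_mul]
      refine le_of_deriv_le (c := 1 / 200) (by simp [padeSin_zero_right])
        hd (hp 4⁻¹) ?_ hx hx2
      intro y hy hy2
      have hκ0 : 0 ≤ κ := hκ.trans' (by positivity)
      have hT : 0 ≤ (-1) ^ r * padeSin r y := le_trans (by positivity) (ih y hy hy2).1
      calc 2 * κ * Real.sin y * ((-1) ^ r * padeSin r y)
          ≤ 2 * ((r : ℝ) + 1) * y * (y ^ (2 * r + 1) / 4) := by
            refine mul_le_mul ?_ (ih y hy hy2).2 hT (by positivity)
            refine mul_le_mul (by linarith) (Real.sin_le hy) ?_ (by positivity)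
            exact Real.sin_nonneg_of_nonneg_of_le_pi hy (by linarith [Real.pi_gt_three])
        _ = 4⁻¹ * ((2 * r + 2) * y ^ (2 * r + 2)) := by ring
        _ ≤ 4⁻¹ * ((2 * r + 3) * y ^ (2 * r + 2)) := by gcongr; linarith

/-- Termwise comparison with `C(r + 1, j) C(r, m)`, whose sum is `C(2r + 1, r)` by
Vandermonde. -/
theorem sum_padeCoeff_le (r : ℕ) :
    ∑ p ∈ Finset.HasAntidiagonal.antidiagonal r, padeCoeff p.1 p.2 ≤ 4 ^ r := by
  have h1 : ∀ p ∈ Finset.HasAntidiagonal.antidiagonal r,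
      padeCoeff p.1 p.2 ≤ ((r + 1).choose p.1 * r.choose p.2 : ℕ) := by
    rintro ⟨j, m⟩ hp
    rw [Finset.HasAntidiagonal.mem_antidiagonal] at hp
    simp only at hp ⊢
    have ha := Nat.ascFactorial_eq_factorial_mul_choose (m + 1) j
    have hb := Nat.ascFactorial_eq_factorial_mul_choose j m
    rw [Nat.ascFactorial_eq_prod_range] at ha hb
    rw [show m + 1 + j = r + 1 by omega] at ha
    rw [hp] at hb
    unfold padeCoeff
    push_cast
    have ha' := congrArg (Nat.cast (R := ℝ)) ha
    have hb' := congrArg (Nat.cast (R := ℝ)) hb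
    push_cast at ha' hb'
    gcongr
    · rw [div_le_iff₀' (by positivity), ← ha']
      exact Finset.prod_le_prod (fun i _ => by positivity) fun i _ => by linarith
    · rw [div_le_iff₀' (by positivity), ← hb']
      exact Finset.prod_le_prod (fun i _ => by positivity) fun i _ => by linarith
  refine (Finset.sum_le_sum h1).trans ?_
  rw [← Nat.cast_sum, ← Nat.add_choose_eq, show r + 1 + r = 2 * r + 1 by ring]
  exact_mod_cast Nat.choose_middle_le_pow r

theorem abs_padeCos_le (r : ℕ) (x : ℝ) : |padeCos r x| ≤ 4 ^ r := by
  refine le_trans ?_ (sum_padeCoeff_le r)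
  refine (Finset.abs_sum_le_sum_abs _ _).trans (Finset.sum_le_sum fun p _ => ?_)
  rw [abs_mul, abs_of_pos (padeCoeff_pos _ _)]
  exact mul_le_of_le_one_right (padeCoeff_pos _ _).le (Real.abs_cos_le_one _)

/-- The 2-part of `n!` is at most `2 ^ n`; modulo its odd part, 4 is invertible and the arithmetic
progression becomes a run of `n` consecutive integers. -/
theorem factorial_dvd_two_pow_mul_prod (q n : ℕ) :
    n.factorial ∣ 2 ^ n * ∏ i ∈ Finset.range n, (q + 4 * i) := by
  obtain ⟨v, o, ho, hvo⟩ := Nat.exists_eq_two_pow_mul_odd n.factorial_ne_zero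
  have hv : v ≤ n := by
    rcases Nat.eq_zero_or_pos n with rfl | hn
    · by_contra hv
      have h2 : 2 ∣ Nat.factorial 0 := hvo ▸ Dvd.dvd.mul_right (dvd_pow_self 2 (by omega)) o
      simp at h2
    have h := Nat.emultiplicity_two_factorial_lt hn.ne'
    have h2 : ((v : ℕ) : ℕ∞) ≤ emultiplicity 2 n.factorial :=
      le_emultiplicity_of_pow_dvd (hvo ▸ Dvd.intro _ rfl)
    exact_mod_cast (h2.trans_lt h).le
  rw [hvo]
  refine mul_dvd_mul (pow_dvd_pow 2 hv) ?_
  have hcop : Nat.Coprime 4 o := by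
    rw [show 4 = 2 ^ 2 by rfl]
    exact Nat.Coprime.pow_left 2 (Nat.coprime_two_left.mpr ho)
  obtain ⟨t, ht⟩ : ∃ t : ℕ, 4 * t ≡ q [MOD o] := by
    obtain ⟨s, hs⟩ := Nat.exists_mul_mod_eq_of_coprime q hcop ho.pos.ne'
    exact ⟨s, hs.2⟩
  have h1 : o ∣ 4 ^ n * ∏ i ∈ Finset.range n, (t + i) := by
    refine Dvd.dvd.mul_left ?_ _
    rw [← Nat.ascFactorial_eq_prod_range]
    exact (Dvd.intro_left _ hvo.symm).trans (Nat.factorial_dvd_ascFactorial t n)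
  have h2 : 4 ^ n * ∏ i ∈ Finset.range n, (t + i) ≡ ∏ i ∈ Finset.range n, (q + 4 * i) [MOD o] := by
    have : 4 ^ n * ∏ i ∈ Finset.range n, (t + i) = ∏ i ∈ Finset.range n, (4 * t + 4 * i) := by
      rw [← Finset.card_range n, ← Finset.prod_const, Finset.card_range, ← Finset.prod_mul_distrib]
      exact Finset.prod_congr rfl fun i _ => by ring
    rw [this]
    exact Nat.ModEq.prod fun i _ => ht.add_right _
  exact (h2.dvd_iff dvd_rfl).mp h1

/-- The denominators of the Padé coefficients of order `r` divide `8 ^ r`. -/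
theorem exists_padeCoeff_int (j m : ℕ) : ∃ e : ℤ, (e : ℝ) = 8 ^ (j + m) * padeCoeff j m := by
  have aux : ∀ (q n : ℕ), ∃ e : ℤ,
      (e : ℝ) = 8 ^ n * ((∏ i ∈ Finset.range n, ((q : ℝ) / 4 + i)) / n.factorial) := by
    intro q n
    obtain ⟨e, he⟩ := factorial_dvd_two_pow_mul_prod q n
    refine ⟨e, ?_⟩
    have he' := congrArg (Nat.cast (R := ℝ)) he
    push_cast at he'
    have h4 : (4 : ℝ) ^ n * ∏ i ∈ Finset.range n, ((q : ℝ) / 4 + i) =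
        ∏ i ∈ Finset.range n, ((q : ℝ) + 4 * i) := by
      rw [← Finset.card_range n, ← Finset.prod_const, Finset.card_range, ← Finset.prod_mul_distrib]
      exact Finset.prod_congr rfl fun i _ => by ring
    rw [← h4, ← mul_assoc, ← mul_pow] at he'
    have hn := Nat.cast_ne_zero (R := ℝ).mpr n.factorial_ne_zero
    norm_num at he'
    rw [← mul_div_assoc, he', mul_div_cancel_left₀ _ hn]
    norm_cast
  obtain ⟨e₁, h₁⟩ := aux (4 * m + 5) j
  obtain ⟨e₂, h₂⟩ := aux (4 * j + 3) m
  refine ⟨e₁ * e₂, ?_⟩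
  unfold padeCoeff
  push_cast at h₁ h₂ ⊢
  have a1 : ∀ i : ℕ, (m : ℝ) + 5 / 4 + i = (4 * m + 5) / 4 + i := fun i => by ring
  have a2 : ∀ i : ℕ, (j : ℝ) + 3 / 4 + i = (4 * j + 3) / 4 + i := fun i => by ring
  simp only [a1, a2]
  rw [h₁, h₂]
  ring

/-! ### Ljunggren's equation: reduction to fourth powers -/

/-- A solution of `X² + 1 = 2Y⁴` makes `(X ± i)(239 + i)` a Gaussian fourth power up to a factor
`2` or `1/2`: both factors are associated to `1 ± i` times a fourth power, since
`239 + i = -(1 - i)(3 - 2i) ^ 4`. -/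
theorem ljunggren_fourth_power {X Y : ℤ} (h : X ^ 2 + 1 = 2 * Y ^ 4) :
    ∃ (γ : GaussianInt) (s : ℤ), (s = 1 ∨ s = -1) ∧
      (2 * γ ^ 4 = ⟨X, s⟩ * ⟨239, 1⟩ ∨ γ ^ 4 = 2 * (⟨X, s⟩ * ⟨239, 1⟩)) := by
  obtain ⟨η, u, hu, hη, -⟩ := gaussian_factor h
  have h239 : (⟨239, 1⟩ : GaussianInt) = -(⟨1, -1⟩ * ⟨3, -2⟩ ^ 4) := by decide
  have h4 : (⟨1, 1⟩ : GaussianInt) ^ 4 = -4 := by decide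
  have hn : (⟨1, 1⟩ : GaussianInt) * ⟨1, -1⟩ = 2 := by decide
  have hc : (⟨X, -1⟩ : GaussianInt) = ⟨1, -1⟩ * (star u * star η ^ 4) := by
    have := congrArg star hη
    rw [star_mul', star_mul', star_pow] at this
    exact this
  have hI : (⟨0, 1⟩ : GaussianInt) * ⟨1, -1⟩ = ⟨1, 1⟩ := by decide
  rcases gaussian_unit_cases hu with rfl | rfl | rfl | rfl
  · refine ⟨⟨1, 1⟩ * (η * ⟨3, -2⟩), 1, .inl rfl, .inr ?_⟩
    rw [hη, h239]
    linear_combination (η * ⟨3, -2⟩) ^ 4 * h4 + 2 * η ^ 4 * ⟨3, -2⟩ ^ 4 * hn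
  · refine ⟨η * ⟨3, -2⟩, 1, .inl rfl, .inl ?_⟩
    rw [hη, h239]
    linear_combination -(η ^ 4 * ⟨3, -2⟩ ^ 4 * hn)
  · refine ⟨star η * ⟨3, -2⟩, -1, .inr rfl, .inl ?_⟩
    have hs : star (⟨0, 1⟩ : GaussianInt) = -⟨0, 1⟩ := by decide
    rw [hc, h239, hs]
    linear_combination -(star η ^ 4 * ⟨3, -2⟩ ^ 4 * (hn + ⟨1, -1⟩ * hI))
  · refine ⟨⟨1, 1⟩ * (star η * ⟨3, -2⟩), -1, .inr rfl, .inr ?_⟩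
    have hs : star (⟨0, -1⟩ : GaussianInt) = ⟨0, 1⟩ := by decide
    rw [hc, h239, hs]
    linear_combination (star η * ⟨3, -2⟩) ^ 4 * h4 +
      2 * star η ^ 4 * ⟨3, -2⟩ ^ 4 * (hn + ⟨1, -1⟩ * hI)

/-! ### Solutions of `X ^ 2 + 1 = 2 * Y ^ 4` with small `X` -/

theorem pell_descent {X Z : ℤ} (hX : 1 ≤ X) (hZ : 1 ≤ Z) (h : X ^ 2 + 1 = 2 * Z ^ 2) :
    (X = 1 ∧ Z = 1) ∨ ∃ X' Z' : ℤ, 1 ≤ X' ∧ 1 ≤ Z' ∧ X' ^ 2 + 1 = 2 * Z' ^ 2 ∧ 5 * X' ≤ X ∧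
      X = 3 * X' + 4 * Z' ∧ Z = 2 * X' + 3 * Z' := by
  rcases lt_or_ge X 3 with h3 | h3
  · left
    have : Z < 3 := by nlinarith
    interval_cases X <;> interval_cases Z <;> simp_all
  · right
    refine ⟨3 * X - 4 * Z, 3 * Z - 2 * X, ?_, ?_, ?_, ?_, by ring, by ring⟩
    · nlinarith
    · nlinarith
    · linear_combination h
    · nlinarith

/-- Every solution of `X² + 1 = 2Z²` below `5 ^ n` is one of the first `n` iterates of the
fundamental automorph applied to `(1, 1)`, because each descent step divides `X` by at least 5. -/
theorem pell_iterate (n : ℕ) : ∀ X Z : ℤ, 1 ≤ X → 1 ≤ Z → X ^ 2 + 1 = 2 * Z ^ 2 → X < 5 ^ n →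
    ∃ m < n, (X, Z) = (fun p : ℤ × ℤ => (3 * p.1 + 4 * p.2, 2 * p.1 + 3 * p.2))^[m] (1, 1) := by
  induction n with
  | zero => intro X Z hX hZ h hlt; simp at hlt; omega
  | succ n ih =>
    intro X Z hX hZ h hlt
    rcases pell_descent hX hZ h with ⟨rfl, rfl⟩ | ⟨X', Z', hX', hZ', h', h5, rfl, rfl⟩
    · exact ⟨0, by omega, rfl⟩
    · obtain ⟨m, hm, e⟩ := ih X' Z' hX' hZ' h' (by rw [pow_succ] at hlt; omega)
      refine ⟨m + 1, by omega, ?_⟩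
      rw [Function.iterate_succ_apply', ← e]

theorem ljunggren_small {X Y : ℤ} (hX : 1 ≤ X) (hY : 1 ≤ Y) (h : X ^ 2 + 1 = 2 * Y ^ 4)
    (hlt : X < 5 ^ 13) : Y = 1 ∨ (X = 239 ∧ Y = 13) := by
  obtain ⟨m, hm, e⟩ := pell_iterate 13 X (Y ^ 2) hX (one_le_pow₀ hY) (by rw [h]; ring) hlt
  have hsq : IsSquare (Y ^ 2) := ⟨Y, sq Y⟩
  interval_cases m <;>
    simp only [Function.iterate_succ_apply, Function.iterate_zero_apply, Prod.mk.injEq] at e <;>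
    norm_num only at e <;> obtain ⟨e1, e2⟩ := e <;> rw [e2] at hsq <;> norm_num at hsq
  · left; nlinarith
  · right
    refine ⟨e1, ?_⟩
    nlinarith

/-! ### Ljunggren's equation: large solutions -/

/-- The polar form of `a + i`, with bounds for its argument `φ = arctan (1 / a)`. -/
theorem polar_form {a : ℝ} (ha : 0 < a) : ∃ φ : ℝ, 0 ≤ φ ∧ φ ≤ 1 / a ∧ 1 / √(a ^ 2 + 1) ≤ φ ∧
    √(a ^ 2 + 1) * Real.cos φ = a ∧ √(a ^ 2 + 1) * Real.sin φ = 1 := by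
  have hR : 0 < √(a ^ 2 + 1) := Real.sqrt_pos.mpr (by positivity)
  have hs : √(1 + (1 / a) ^ 2) = √(a ^ 2 + 1) / a := by
    rw [show 1 + (1 / a) ^ 2 = (a ^ 2 + 1) / a ^ 2 by field_simp, Real.sqrt_div (by positivity),
      Real.sqrt_sq ha.le]
  have h0 : 0 ≤ Real.arctan (1 / a) := Real.arctan_nonneg.mpr (by positivity)
  have hsin : Real.sin (Real.arctan (1 / a)) = 1 / √(a ^ 2 + 1) := by
    rw [Real.sin_arctan, hs]; field_simp
  refine ⟨Real.arctan (1 / a), h0, ?_, ?_, ?_, ?_⟩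
  · refine (Real.le_tan h0 (Real.arctan_lt_pi_div_two _)).trans ?_
    rw [Real.tan_arctan]
  · rw [← hsin]; exact Real.sin_le h0
  · rw [Real.cos_arctan, hs]; field_simp
  · rw [hsin]; field_simp

open Finset in
/-- The integer of Thue's method. With `239 + i = ρ exp(i ψ)`, the Gaussian integer
`8 ^ r ∑ padeCoeff j m (239 + i) ^ m (239 - i) ^ j` times `γ = g exp(i (ψ / 4 + κ))` has imaginary
part equal to the right-hand side. -/
theorem exists_int_eq_form {γ : GaussianInt} {ρ ψ g κ : ℝ}
    (hc : ρ * Real.cos ψ = 239) (hs : ρ * Real.sin ψ = 1)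
    (hγ : GaussianInt.toComplex γ = g * Complex.exp ((ψ / 4 + κ : ℝ) * Complex.I)) (r : ℕ) :
    ∃ N : ℤ, (N : ℝ) = (8 * ρ) ^ r * g *
      (Real.cos κ * padeSin r ψ + Real.sin κ * padeCos r ψ) := by
  choose e he using exists_padeCoeff_int
  have hz : GaussianInt.toComplex ⟨239, 1⟩ = ρ * Complex.exp ((ψ : ℝ) * Complex.I) := by
    rw [Complex.exp_mul_I, ← Complex.ofReal_cos, ← Complex.ofReal_sin, mul_add, ← mul_assoc,
      ← Complex.ofReal_mul, ← Complex.ofReal_mul, hc, hs, GaussianInt.toComplex_def]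
    norm_num
  have hz' : GaussianInt.toComplex ⟨239, -1⟩ = ρ * Complex.exp ((-ψ : ℝ) * Complex.I) := by
    rw [Complex.exp_mul_I, ← Complex.ofReal_cos, ← Complex.ofReal_sin, mul_add, ← mul_assoc,
      ← Complex.ofReal_mul, ← Complex.ofReal_mul, Real.cos_neg, Real.sin_neg, mul_neg, hc, hs,
      GaussianInt.toComplex_def]
    norm_num
  refine ⟨((∑ p ∈ antidiagonal r, (e p.1 p.2 : GaussianInt) *
    (⟨239, 1⟩ ^ p.2 * ⟨239, -1⟩ ^ p.1)) * γ).im, ?_⟩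
  rw [GaussianInt.intCast_im, map_mul, map_sum, hγ, sum_mul, Complex.im_sum]
  rw [padeSin, padeCos, mul_sum, mul_sum, ← sum_add_distrib, mul_sum]
  refine sum_congr rfl fun p hp => ?_
  rw [HasAntidiagonal.mem_antidiagonal] at hp
  have key : GaussianInt.toComplex ((e p.1 p.2 : GaussianInt) *
      (⟨239, 1⟩ ^ p.2 * ⟨239, -1⟩ ^ p.1)) * (g * Complex.exp ((ψ / 4 + κ : ℝ) * Complex.I)) =
      ((8 * ρ) ^ r * g * padeCoeff p.1 p.2 : ℝ) *
        Complex.exp (((((p.2 : ℝ) - p.1 + 1 / 4) * ψ + κ : ℝ)) * Complex.I) := by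
    have he' := he p.1 p.2
    rw [hp] at he'
    have he2 : GaussianInt.toComplex (e p.1 p.2 : GaussianInt) =
        ((8 ^ r * padeCoeff p.1 p.2 : ℝ) : ℂ) := by
      rw [← he']; simp
    rw [map_mul, map_mul, map_pow, map_pow, hz, hz', he2, mul_pow, mul_pow, ← Complex.exp_nat_mul,
      ← Complex.exp_nat_mul]
    have : Complex.exp (((((p.2 : ℝ) - p.1 + 1 / 4) * ψ + κ : ℝ)) * Complex.I) =
      Complex.exp (p.2 * ((ψ : ℝ) * Complex.I)) * Complex.exp (p.1 * ((-ψ : ℝ) * Complex.I)) *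
       Complex.exp ((ψ / 4 + κ : ℝ) * Complex.I) := by
      rw [← Complex.exp_add, ← Complex.exp_add]
      congr 1
      push_cast
      ring
    rw [this, ← hp]
    push_cast
    ring
  rw [key, Complex.im_ofReal_mul, Complex.exp_ofReal_mul_I_im, Real.sin_add]
  ring

/-- The fourth power relation for `γ` determines its argument modulo `π / 2`, so some associate
`γ'` of `γ` has argument exactly `(ψ ± φ) / 4` with `φ = arctan (1 / X)`: up to the tiny `κ`, the
argument of a fourth root of `239 + i`. -/
theorem exists_polar_data {X s : ℤ} {γ : GaussianInt} {ρ ψ : ℝ} (hX : 1 ≤ X)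
    (hs : s = 1 ∨ s = -1)
    (hγ : 2 * γ ^ 4 = ⟨X, s⟩ * ⟨239, 1⟩ ∨ γ ^ 4 = 2 * (⟨X, s⟩ * ⟨239, 1⟩))
    (hρ : 0 < ρ) (hcos : ρ * Real.cos ψ = 239) (hsin : ρ * Real.sin ψ = 1) :
    ∃ (γ' : GaussianInt) (g κ : ℝ), 0 ≤ g ∧
      GaussianInt.toComplex γ' = g * Complex.exp ((ψ / 4 + κ : ℝ) * Complex.I) ∧
      ρ * √((X : ℝ) ^ 2 + 1) / 2 ≤ g ^ 4 ∧ g ^ 4 ≤ 2 * (ρ * √((X : ℝ) ^ 2 + 1)) ∧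
      |κ| ≤ 1 / (4 * X) := by
  have hX0 : (0 : ℝ) < X := by exact_mod_cast hX
  obtain ⟨φ, hφ0, hφ, -, hφc, hφs⟩ := polar_form hX0
  set R := √((X : ℝ) ^ 2 + 1)
  have hR : 0 ≤ R := Real.sqrt_nonneg _
  have hz : GaussianInt.toComplex ⟨239, 1⟩ = ρ * Complex.exp ((ψ : ℝ) * Complex.I) := by
    rw [Complex.exp_mul_I, ← Complex.ofReal_cos, ← Complex.ofReal_sin, mul_add, ← mul_assoc,
      ← Complex.ofReal_mul, ← Complex.ofReal_mul, hcos, hsin, GaussianInt.toComplex_def]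
    norm_num
  have hw : GaussianInt.toComplex ⟨X, s⟩ = R * Complex.exp ((s * φ : ℝ) * Complex.I) := by
    rw [Complex.exp_mul_I, ← Complex.ofReal_cos, ← Complex.ofReal_sin, mul_add, ← mul_assoc,
      ← Complex.ofReal_mul, ← Complex.ofReal_mul, GaussianInt.toComplex_def]
    rcases hs with rfl | rfl
    · simp [hφc, hφs]
    · simp [hφc, hφs]
  obtain ⟨c, hc1, hc2, hc⟩ : ∃ c : ℝ, 1 / 2 ≤ c ∧ c ≤ 2 ∧ GaussianInt.toComplex γ ^ 4 =
      (c * (ρ * R) : ℝ) * Complex.exp ((ψ + s * φ : ℝ) * Complex.I) := by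
    have e : Complex.exp ((ψ + s * φ : ℝ) * Complex.I) =
        Complex.exp ((s * φ : ℝ) * Complex.I) * Complex.exp ((ψ : ℝ) * Complex.I) := by
      rw [← Complex.exp_add]
      congr 1
      push_cast
      ring
    rcases hγ with hγ | hγ
    · refine ⟨1 / 2, le_rfl, by norm_num, ?_⟩
      have := congrArg GaussianInt.toComplex hγ
      rw [map_mul, map_mul, map_pow, hz, hw, map_ofNat] at this
      rw [e]
      push_cast at this ⊢
      linear_combination this / 2
    · refine ⟨2, by norm_num, le_rfl, ?_⟩
      have := congrArg GaussianInt.toComplex hγ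
      rw [map_mul, map_mul, map_pow, hz, hw, map_ofNat] at this
      rw [e]
      push_cast at this ⊢
      linear_combination this
  have hg4 : ‖GaussianInt.toComplex γ‖ ^ 4 = c * (ρ * R) := by
    rw [← norm_pow, hc, norm_mul, Complex.norm_exp_ofReal_mul_I, mul_one, Complex.norm_real,
      Real.norm_of_nonneg (by positivity)]
  set g := ‖GaussianInt.toComplex γ‖
  have hδ : (g * Complex.exp ((ψ / 4 + s * φ / 4 : ℝ) * Complex.I)) ^ 4 =
      GaussianInt.toComplex γ ^ 4 := by
    rw [hc, mul_pow, ← Complex.exp_nat_mul, ← hg4]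
    push_cast
    congr 2
    ring
  set δ := g * Complex.exp ((ψ / 4 + s * φ / 4 : ℝ) * Complex.I)
  have hρR : 0 ≤ ρ * R := by positivity
  obtain ⟨γ', hγ'⟩ : ∃ γ' : GaussianInt, GaussianInt.toComplex γ' = δ := by
    have hI : GaussianInt.toComplex ⟨0, 1⟩ = Complex.I := by simp [GaussianInt.toComplex_def]
    have hprod : (GaussianInt.toComplex γ - δ) * (GaussianInt.toComplex γ + δ) *
        (GaussianInt.toComplex γ - Complex.I * δ) *
        (GaussianInt.toComplex γ + Complex.I * δ) = 0 := by
      linear_combination -hδ - (GaussianInt.toComplex γ ^ 2 - δ ^ 2) * δ ^ 2 * Complex.I_sq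
    rcases mul_eq_zero.mp hprod with hprod | hprod
    · rcases mul_eq_zero.mp hprod with hprod | hprod
      · rcases mul_eq_zero.mp hprod with hprod | hprod
        · exact ⟨γ, by linear_combination hprod⟩
        · exact ⟨-γ, by rw [map_neg]; linear_combination -hprod⟩
      · exact ⟨-(⟨0, 1⟩ * γ), by
          rw [map_neg, map_mul, hI]
          linear_combination -Complex.I * hprod - δ * Complex.I_sq⟩
    · exact ⟨⟨0, 1⟩ * γ, by
        rw [map_mul, hI]
        linear_combination Complex.I * hprod - δ * Complex.I_sq⟩
  refine ⟨γ', g, s * φ / 4, norm_nonneg _, hγ', ?_, ?_, ?_⟩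
  · rw [hg4]; nlinarith
  · rw [hg4]; nlinarith
  · have hs1 : |(s : ℝ)| = 1 := by rcases hs with rfl | rfl <;> simp
    rw [abs_div, abs_mul, hs1, abs_of_nonneg hφ0, one_mul, abs_of_pos (by norm_num : (0 : ℝ) < 4),
      mul_comm 4 (X : ℝ), ← div_div]
    gcongr

/-- If `X` is large against `380814 ^ r`, the lower bound for `padeSin r ψ` dominates the `κ` term. -/
theorem form_ne_zero {X ψ κ : ℝ} {r : ℕ} (hψ : 0 ≤ ψ) (hψ1 : 1 / 240 ≤ ψ) (hψ2 : ψ ≤ 1 / 239)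
    (hψ3 : 1 / 57122 ≤ ψ ^ 2) (hX1 : 1 ≤ X) (hX : 253 * 380814 ^ r ≤ X) (hκ : |κ| ≤ 1 / (4 * X))
    (hcos : 0.999 ≤ Real.cos κ) :
    Real.cos κ * padeSin r ψ + Real.sin κ * padeCos r ψ ≠ 0 := by
  intro h
  have hX0 : 0 < X := by linarith
  have hS := (padeSin_bounds r ψ hψ (by linarith)).1
  have h1 : (0.6 / 57122 : ℝ) ^ r / 1000 ≤ 0.24 * 0.6 ^ r * ψ ^ (2 * r + 1) := by
    calc (0.6 / 57122 : ℝ) ^ r / 1000 = 0.24 * 0.6 ^ r * ((1 / 57122) ^ r * (1 / 240)) := by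
          rw [div_pow, div_pow, one_pow]; ring
      _ ≤ 0.24 * 0.6 ^ r * ((ψ ^ 2) ^ r * ψ) := by gcongr
      _ = _ := by rw [pow_succ ψ (2 * r), pow_mul]
  have h2 : (4 : ℝ) ^ r * 253 ≤ (0.6 / 57122 : ℝ) ^ r * X := by
    calc (4 : ℝ) ^ r * 253 ≤ (0.6 / 57122 * 380814) ^ r * 253 := by gcongr; norm_num
      _ = (0.6 / 57122 : ℝ) ^ r * (253 * 380814 ^ r) := by rw [mul_pow]; ring
      _ ≤ _ := by gcongr
  have h3 : |Real.sin κ * padeCos r ψ| ≤ 1 / (4 * X) * 4 ^ r := by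
    rw [abs_mul]
    exact mul_le_mul (Real.abs_sin_le_abs.trans hκ) (abs_padeCos_le r ψ) (abs_nonneg _)
      (by positivity)
  have h4 : 0.999 * ((0.6 / 57122 : ℝ) ^ r / 1000) ≤ |Real.cos κ * padeSin r ψ| := by
    rw [abs_mul, abs_of_nonneg (by linarith : 0 ≤ Real.cos κ)]
    refine mul_le_mul hcos ?_ (by positivity) (by linarith)
    refine h1.trans (hS.trans ((le_abs_self _).trans ?_))
    rw [abs_mul, abs_pow, abs_neg, abs_one, one_pow, one_mul]
  have h5 : |Real.cos κ * padeSin r ψ| = |Real.sin κ * padeCos r ψ| := by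
    rw [eq_neg_of_add_eq_zero_left h, abs_neg]
  have h6 : 0.999 * ((0.6 / 57122 : ℝ) ^ r / 1000) * (4 * X) ≤ 4 ^ r := by
    have := mul_le_mul_of_nonneg_right (h4.trans (h5.le.trans h3)) (by positivity : 0 ≤ 4 * X)
    rwa [one_div_mul_eq_div, div_mul_cancel₀ _ (by positivity)] at this
  have h7 : (0 : ℝ) < 4 ^ r := by positivity
  nlinarith

/-- The form is below 1 as soon as `r` is large enough for `g` (first condition), while `X` is
large against `g` (second condition). -/
theorem abs_form_lt_one {X ρ ψ κ g : ℝ} {r : ℕ} (hψ : 0 ≤ ψ) (hψ2 : ψ ≤ 1 / 239)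
    (hρ0 : 0 ≤ ρ) (hρ : ρ ≤ 239.1) (hg : 0 ≤ g) (hX0 : 0 < X)
    (hκ : |κ| ≤ 1 / (4 * X)) (hg1 : g < 478 * 29.8 ^ r) (hg2 : 7652 ^ r * g < 2 * X) :
    |(8 * ρ) ^ r * g * (Real.cos κ * padeSin r ψ + Real.sin κ * padeCos r ψ)| < 1 := by
  obtain ⟨hS1, hS2⟩ := padeSin_bounds r ψ hψ (by linarith)
  have hS : |padeSin r ψ| ≤ ψ ^ (2 * r + 1) / 4 := by
    have : |padeSin r ψ| = |(-1) ^ r * padeSin r ψ| := by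
      rw [abs_mul, abs_pow, abs_neg, abs_one, one_pow, one_mul]
    rw [this, abs_of_nonneg (le_trans (by positivity) hS1)]
    exact hS2
  have h3 : |Real.sin κ * padeCos r ψ| ≤ 1 / (4 * X) * 4 ^ r := by
    rw [abs_mul]
    exact mul_le_mul (Real.abs_sin_le_abs.trans hκ) (abs_padeCos_le r ψ) (abs_nonneg _)
      (by positivity)
  have h4 : |Real.cos κ * padeSin r ψ| ≤ ψ ^ (2 * r + 1) / 4 := by
    rw [abs_mul]
    exact (mul_le_of_le_one_left (abs_nonneg _) (Real.abs_cos_le_one _)).trans hS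
  have h5 : (8 * ρ) ^ r * g * (ψ ^ (2 * r + 1) / 4) < 1 / 2 := by
    calc (8 * ρ) ^ r * g * (ψ ^ (2 * r + 1) / 4) = (8 * ρ * ψ ^ 2) ^ r * g * (ψ / 4) := by
          rw [pow_succ, pow_mul, mul_pow (8 * ρ)]; ring
      _ ≤ (8 * 239.1 * (1 / 239) ^ 2) ^ r * g * (1 / 239 / 4) := by gcongr
      _ ≤ (1 / 29.8) ^ r * g * (1 / 239 / 4) := by gcongr; norm_num
      _ < (1 / 29.8) ^ r * (478 * 29.8 ^ r) * (1 / 239 / 4) := by gcongr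
      _ = (1 / 29.8 * 29.8) ^ r * (478 * (1 / 239 / 4)) := by rw [mul_pow]; ring
      _ = 1 / 2 := by norm_num
  have h6 : (8 * ρ) ^ r * g * (1 / (4 * X) * 4 ^ r) < 1 / 2 := by
    calc (8 * ρ) ^ r * g * (1 / (4 * X) * 4 ^ r) = (8 * ρ * 4) ^ r * g / (4 * X) := by
          rw [mul_pow (8 * ρ)]; ring
      _ ≤ 7652 ^ r * g / (4 * X) := by gcongr; linarith
      _ < 2 * X / (4 * X) := by gcongr
      _ = 1 / 2 := by field_simp; norm_num
  have hK : 0 ≤ (8 * ρ) ^ r * g := by positivity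
  rw [abs_mul, abs_of_nonneg hK]
  calc _ ≤ (8 * ρ) ^ r * g * (ψ ^ (2 * r + 1) / 4 + 1 / (4 * X) * 4 ^ r) := by
        gcongr
        exact (abs_add_le _ _).trans (add_le_add h4 h3)
    _ < 1 := by linarith

/-- There is no solution with `X ≥ 5 ^ 13`. Here `r = q + 1` is the least order for which the
remainder beats `g = |γ|`; as `X` has the order of `g ^ 4`, the integer of `exists_int_eq_form` is
then both nonzero and of absolute value below 1. -/
theorem ljunggren_large {X Y : ℤ} (hX : 5 ^ 13 ≤ X) (h : X ^ 2 + 1 = 2 * Y ^ 4) : False := by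
  obtain ⟨γ₀, s, hs, hγ₀⟩ := ljunggren_fourth_power h
  obtain ⟨ψ, hψ0, hψ2, hψ1, hcos, hsin⟩ := polar_form (a := 239) (by norm_num)
  rw [show (239 : ℝ) ^ 2 + 1 = 57122 by norm_num] at *
  have hρ2 : √(57122 : ℝ) ^ 2 = 57122 := Real.sq_sqrt (by norm_num)
  have hρ0 : 0 ≤ √(57122 : ℝ) := Real.sqrt_nonneg _
  set ρ := √(57122 : ℝ)
  have hρ1 : 239 ≤ ρ := by nlinarith
  have hρ : ρ ≤ 239.1 := by nlinarith
  have hψ3 : 1 / 57122 ≤ ψ ^ 2 := by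
    rw [← hρ2, ← one_div_pow]; gcongr
  have hψ4 : 1 / 240 ≤ ψ := hψ1.trans' (by gcongr; linarith)
  obtain ⟨γ, g, κ, hg0, hγ, hgl, hgu, hκ⟩ :=
    exists_polar_data (by omega) hs hγ₀ (by linarith) hcos hsin
  have hXR : (5 : ℝ) ^ 13 ≤ X := by exact_mod_cast hX
  have hR1 : (X : ℝ) ≤ √((X : ℝ) ^ 2 + 1) := Real.le_sqrt_of_sq_le (by linarith)
  have hR2 : √((X : ℝ) ^ 2 + 1) ≤ 1.001 * X := Real.sqrt_le_iff.mpr ⟨by linarith, by nlinarith⟩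
  set R := √((X : ℝ) ^ 2 + 1)
  have hgX : g ^ 4 ≤ 480 * X := by nlinarith
  have hg478 : 478 ≤ g := by
    by_contra! hlt
    have : g ^ 4 < 478 ^ 4 := by gcongr
    nlinarith
  -- `8 ρ ψ²` is about `1 / 29.87`, and `478 = 2 * 239`.
  obtain ⟨q, hq1, hq2⟩ := exists_nat_pow_near (x := g / 478) (y := 29.8)
    (by rw [le_div_iff₀ (by norm_num)]; linarith) (by norm_num)
  rw [le_div_iff₀ (by norm_num)] at hq1
  rw [div_lt_iff₀ (by norm_num)] at hq2
  have hcosκ : 0.999 ≤ Real.cos κ := by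
    have h1 := Real.one_sub_sq_div_two_le_cos (x := κ)
    have h2 : |κ| ≤ 0.01 := by
      refine hκ.trans ?_
      rw [div_le_iff₀ (by linarith)]
      linarith
    have h3 : κ ^ 2 ≤ 0.01 ^ 2 := by rw [← sq_abs]; gcongr
    linarith
  have hX1 : 253 * 380814 ^ (q + 1) ≤ (X : ℝ) := by
    have : 480 * (253 * (380814 : ℝ) ^ (q + 1)) ≤ 480 * X := by
      calc 480 * (253 * (380814 : ℝ) ^ (q + 1)) = 480 * 253 * 380814 * 380814 ^ q := by ring
        _ ≤ 478 ^ 4 * (29.8 ^ 4) ^ q := by gcongr <;> norm_num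
        _ = (29.8 ^ q * 478) ^ 4 := by rw [mul_pow, ← pow_mul, ← pow_mul, mul_comm 4 q]; ring
        _ ≤ g ^ 4 := by gcongr
        _ ≤ _ := hgX
    linarith
  have hg2 : 7652 ^ (q + 1) * g < 2 * (X : ℝ) := by
    have h3 : 240 * 7652 ^ (q + 1) < g ^ 3 := by
      calc 240 * (7652 : ℝ) ^ (q + 1) = 240 * 7652 * 7652 ^ q := by ring
        _ < 478 ^ 3 * 7652 ^ q := by gcongr; norm_num
        _ ≤ 478 ^ 3 * (29.8 ^ 3) ^ q := by gcongr; norm_num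
        _ = (29.8 ^ q * 478) ^ 3 := by rw [mul_pow, ← pow_mul, ← pow_mul, mul_comm 3 q]; ring
        _ ≤ g ^ 3 := by gcongr
    nlinarith
  obtain ⟨N, hN⟩ := exists_int_eq_form hcos hsin hγ (q + 1)
  have hN1 := abs_form_lt_one (r := q + 1) hψ0 hψ2 hρ0 hρ hg0 (by linarith) hκ (by linarith) hg2
  have hN0 := form_ne_zero (r := q + 1) hψ0 hψ4 hψ2 hψ3 (by linarith) hX1 hκ hcosκ
  rw [← hN] at hN1
  have hNz : N = 0 := Int.abs_lt_one_iff.mp (by exact_mod_cast hN1)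
  rw [hNz, Int.cast_zero, eq_comm] at hN
  have : (8 * ρ) ^ (q + 1) * g ≠ 0 := by positivity
  exact (mul_ne_zero this hN0) hN

/-! ### The equation for all exponents -/

theorem stmt_13 (y z : ℤ) (k : ℕ) (hk : 2 < k) (hy : 1 ≤ y) (hz : 1 ≤ z)
    (h : y ^ 2 + 1 = 2 * z ^ k) :
    (y = 239 ∧ z = 13 ∧ k = 4) ∨ (y = 1 ∧ z = 1) := by
  have hz1 : z ^ k = 1 → z = 1 := fun h1 => by
    rcases hz.eq_or_lt with h2 | h2
    · exact h2.symm
    · exact absurd h1 (one_lt_pow₀ h2 (by omega)).ne'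
  rcases Nat.eq_two_pow_or_exists_odd_prime_and_dvd k with ⟨e, he⟩ | ⟨p, hp, ⟨j, rfl⟩, hodd⟩
  · obtain ⟨j, rfl⟩ : 4 ∣ k := by
      have h2 : 2 ≤ e := by
        by_contra! h2
        interval_cases e <;> omega
      rw [he, show 4 = 2 ^ 2 by rfl]
      exact pow_dvd_pow 2 h2
    have h' : y ^ 2 + 1 = 2 * (z ^ j) ^ 4 := by rw [h, ← pow_mul, mul_comm j]
    have hlt : y < 5 ^ 13 := by
      by_contra! hle
      exact ljunggren_large hle h'
    rcases ljunggren_small hy (one_le_pow₀ hz) h' hlt with h1 | ⟨h1, h2⟩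
    · right
      have hj : z = 1 := hz1 (by rw [mul_comm, pow_mul, h1, one_pow])
      rw [hj, one_pow] at h
      exact ⟨by nlinarith, hj⟩
    · left
      -- `13` is prime, so it is not a proper power.
      have hj : j = 1 := by
        have hprime : Prime (z ^ j) := by
          rw [h2]; exact Int.prime_iff_natAbs_prime.mpr (by norm_num)
        by_contra hj
        exact not_irreducible_pow hj hprime.irreducible
      subst hj
      exact ⟨h1, by simpa using h2, rfl⟩
  · right
    have hp3 : 3 ≤ p := by
      have := hp.two_le
      obtain ⟨t, ht⟩ := hodd
      omega
    have h' : y ^ 2 + 1 = 2 * (z ^ j) ^ p := by rw [h, ← pow_mul, mul_comm j]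
    have h1 := stormer hodd hp3 hy h'
    subst h1
    exact ⟨rfl, hz1 (by linarith)⟩
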